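/- For all complex parameters γ₁,γ₂,γ₃,γ₄, the operator Î₄ = p̂₂² + γ₁ q̂₂p̂₂ + γ₂( (q̂₁²+q̂₂²)p̂₂² − Ĉ² ) + γ₃( q̂₂³(p̂₂³ − p̂₁²p̂₂) + (q̂₁³+3q̂₁q̂₂²)p̂₁p̂₂² − 3i q̂₂²p̂₂² − 3i q̂₁q̂₂p̂₁p̂₂ − q̂₂p̂₂ ) + γ₄( (q̂₂⁴−q̂₁⁴)(p̂₂⁴ − p̂₁²p̂₂²) + 4(q̂₁³q̂₂+q̂₁q̂₂³)p̂₁p̂₂³ − 6i(q̂₂³+q̂₁²q̂₂)p̂₂³ − 6i(q̂₁³+q̂₁q̂₂²)p̂₁p̂₂² − 4(q̂₁²+q̂₂²)p̂₂² + 4Ĉ² ) commutes with the generalized quantum Zernike Hamiltonian Ĥ₄ = p̂₁² + p̂₂² + Σ_{n=1}^{4} γₙ D̂ⁿ: for every smooth function ψ : ℝ² → ℂ one has Ĥ₄(Î₄ψ) = Î₄(Ĥ₄ψ). -/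

import Mathlib

noncomputable section

/-- Wavefunctions on the plane. -/
abbrev WF := (ℝ × ℝ) → ℂ

/-- Operators acting on wavefunctions. -/
abbrev Op := WF → WF

/-- Position operator `q̂₁`: multiplication by `q₁`. -/
def q1op : Op := fun ψ x => (x.1 : ℂ) * ψ x

/-- Position operator `q̂₂`: multiplication by `q₂`. -/
def q2op : Op := fun ψ x => (x.2 : ℂ) * ψ x

/-- Momentum operator `p̂₁ = −i ∂/∂q₁`. -/
def p1op : Op := fun ψ x => -Complex.I * deriv (fun t => ψ (t, x.2)) x.1

/-- Momentum operator `p̂₂ = −i ∂/∂q₂`. -/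
def p2op : Op := fun ψ x => -Complex.I * deriv (fun t => ψ (x.1, t)) x.2

/-- The dilation operator `D̂ = q̂₁p̂₁ + q̂₂p̂₂`. -/
def Dop : Op := q1op ∘ p1op + q2op ∘ p2op

/-- The quantum angular momentum `Ĉ = q̂₁p̂₂ − q̂₂p̂₁`. -/
def Cop : Op := q1op ∘ p2op - q2op ∘ p1op

/-- The generalized quantum Zernike Hamiltonian for `N = 4`:
`Ĥ₄ = p̂₁² + p̂₂² + Σ_{n=1}^{4} γₙ D̂ⁿ`. -/
def H4op (γ₁ γ₂ γ₃ γ₄ : ℂ) : Op :=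
  p1op ∘ p1op + p2op ∘ p2op
    + γ₁ • Dop + γ₂ • (Dop ∘ Dop) + γ₃ • (Dop ∘ Dop ∘ Dop)
    + γ₄ • (Dop ∘ Dop ∘ Dop ∘ Dop)

/-- The fourth-order quantum integral, written for generic position and momentum
operators `Q₁, Q₂, P₁, P₂` (so that the interchange `(q̂₁,p̂₁) ↔ (q̂₂,p̂₂)` is
realized by permuting the arguments). -/
def Iop (Q1 Q2 P1 P2 : Op) (γ₁ γ₂ γ₃ γ₄ : ℂ) : Op :=
  let C : Op := Q1 ∘ P2 - Q2 ∘ P1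
  P2 ∘ P2 + γ₁ • (Q2 ∘ P2)
    + γ₂ • ((Q1 ∘ Q1 + Q2 ∘ Q2) ∘ (P2 ∘ P2) - C ∘ C)
    + γ₃ • ((Q2 ∘ Q2 ∘ Q2) ∘ (P2 ∘ P2 ∘ P2 - P1 ∘ P1 ∘ P2)
        + (Q1 ∘ Q1 ∘ Q1 + (3 : ℂ) • (Q1 ∘ Q2 ∘ Q2)) ∘ (P1 ∘ P2 ∘ P2)
        - (3 * Complex.I) • (Q2 ∘ Q2 ∘ P2 ∘ P2)
        - (3 * Complex.I) • (Q1 ∘ Q2 ∘ P1 ∘ P2)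
        - Q2 ∘ P2)
    + γ₄ • ((Q2 ∘ Q2 ∘ Q2 ∘ Q2 - Q1 ∘ Q1 ∘ Q1 ∘ Q1)
          ∘ (P2 ∘ P2 ∘ P2 ∘ P2 - P1 ∘ P1 ∘ P2 ∘ P2)
        + (4 : ℂ) • ((Q1 ∘ Q1 ∘ Q1 ∘ Q2 + Q1 ∘ Q2 ∘ Q2 ∘ Q2) ∘ (P1 ∘ P2 ∘ P2 ∘ P2))
        - (6 * Complex.I) • ((Q2 ∘ Q2 ∘ Q2 + Q1 ∘ Q1 ∘ Q2) ∘ (P2 ∘ P2 ∘ P2))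
        - (6 * Complex.I) • ((Q1 ∘ Q1 ∘ Q1 + Q1 ∘ Q2 ∘ Q2) ∘ (P1 ∘ P2 ∘ P2))
        - (4 : ℂ) • ((Q1 ∘ Q1 + Q2 ∘ Q2) ∘ (P2 ∘ P2))
        + (4 : ℂ) • (C ∘ C))

/-- The fourth-order quantum integral `Î₄`. -/
def I4op (γ₁ γ₂ γ₃ γ₄ : ℂ) : Op := Iop q1op q2op p1op p2op γ₁ γ₂ γ₃ γ₄

/-- `Î₄'`: obtained from `Î₄` by the interchange `(q̂₁,p̂₁) ↔ (q̂₂,p̂₂)`. -/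
def I4op' (γ₁ γ₂ γ₃ γ₄ : ℂ) : Op := Iop q2op q1op p2op p1op γ₁ γ₂ γ₃ γ₄

/-!
For every polynomial `f`, the Hamiltonian `p₁² + p₂² + f(D)` has the chiral integral
`(p₁ + ip₂)² + Z f[D, S]`, where `Z = (q₁ + iq₂)(p₁ + ip₂)`, `S = iC + 2i` and `f[D, S]` is the
divided difference. Indeed `p₁² + p₂²` and `(p₁ + ip₂)²` both shift `D` by `2i`, and multiplying `Z`
by `p₁² + p₂²` on the left or right gives `(p₁ + ip₂)²` times `D - S` or `D + 2i - S`, so that both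
products telescope. Reflecting `(q₂, p₂)` gives a second such integral. Half of the Hamiltonian
minus a quarter of the sum of the two is an integral with leading term `p₂²`. For `f = ∑ γₙ Xⁿ`
it differs from `Î₄` by a polynomial in `C`, which commutes with the Hamiltonian as well.
-/

open Complex Polynomial

section DividedDifference

variable {R A : Type*}

section Semiring

variable [CommSemiring R] [Semiring A] [Algebra R A]

/-- The divided difference `(f(x) - f(y)) / (x - y)` of a polynomial `f` at two elements of an
algebra, `∑_{i < n} xⁱ yⁿ⁻¹⁻ⁱ` for `f = Xⁿ`, with the powers of `x` on the left. -/
def dividedDifference (x y : A) : R[X] →ₗ[R] A :=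
  lsum fun n ↦ LinearMap.toSpanSingleton R A (∑ i ∈ Finset.range n, x ^ i * y ^ (n - 1 - i))

theorem dividedDifference_monomial (x y : A) (n : ℕ) (r : R) :
    dividedDifference x y (monomial n r) =
      r • ∑ i ∈ Finset.range n, x ^ i * y ^ (n - 1 - i) := by
  simp [dividedDifference, sum_monomial_index]

theorem dividedDifference_one (x y : A) : dividedDifference x y (1 : R[X]) = 0 := by
  rw [← monomial_zero_one, dividedDifference_monomial, Finset.sum_range_zero, smul_zero]

theorem dividedDifference_X_mul (x y : A) (f : R[X]) :
    dividedDifference x y (X * f) = x * dividedDifference x y f + aeval y f := by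
  induction f using Polynomial.induction_on' with
  | add f g hf hg => rw [mul_add, map_add, hf, hg, map_add, map_add, mul_add, add_add_add_comm]
  | monomial n r =>
    rw [X_mul_monomial, dividedDifference_monomial, dividedDifference_monomial, aeval_monomial,
      Finset.sum_range_succ', mul_smul_comm, Finset.mul_sum, smul_add, ← Algebra.smul_def]
    simp only [pow_succ', mul_assoc, pow_zero, one_mul, Nat.add_sub_cancel, Nat.sub_zero,
      Nat.sub_sub, Nat.add_comm 1]

theorem semiconjBy_aeval {a x y : A} (h : SemiconjBy a x y) (f : R[X]) :
    SemiconjBy a (aeval x f) (aeval y f) := by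
  induction f using Polynomial.induction_on' with
  | add f g hf hg => simpa only [map_add] using hf.add_right hg
  | monomial n r =>
    simp only [aeval_monomial]
    exact (Algebra.commute_algebraMap_right r a).semiconjBy.mul_right (h.pow_right n)

theorem semiconjBy_dividedDifference {a x x' y y' : A} (hx : SemiconjBy a x x')
    (hy : SemiconjBy a y y') (f : R[X]) :
    SemiconjBy a (dividedDifference x y f) (dividedDifference x' y' f) := by
  induction f using Polynomial.induction_on' with
  | add f g hf hg => simpa only [map_add] using hf.add_right hg
  | monomial n r =>
    simp only [dividedDifference_monomial, SemiconjBy, mul_smul_comm, smul_mul_assoc,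
      Finset.mul_sum, Finset.sum_mul]
    congr! 2 with i
    exact (hx.pow_right i).mul_right (hy.pow_right _)

end Semiring

variable [CommRing R] [Ring A] [Algebra R A]

theorem sub_mul_dividedDifference {x y : A} (h : Commute x y) (f : R[X]) :
    (x - y) * dividedDifference x y f = aeval x f - aeval y f := by
  induction f using Polynomial.induction_on' with
  | add f g hf hg => simp only [map_add, mul_add, hf, hg, add_sub_add_comm]
  | monomial n r =>
    rw [dividedDifference_monomial, mul_smul_comm, h.mul_geom_sum₂, aeval_monomial,
      aeval_monomial, ← Algebra.smul_def, ← Algebra.smul_def, smul_sub]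

-- The two telescoping products involve the same `f(S)`, so for `g = f[D, S]` the commutator
-- `[K, Z * g]` is `L * (f(D) - f(D + c)) = -[f(D), L]`.
theorem commute_add_aeval_add_mul_dividedDifference {K L Z D S c : A} (f : R[X])
    (hKL : Commute K L) (hKD : SemiconjBy K (D + c) D) (hLD : SemiconjBy L (D + c) D)
    (hKS : Commute K S) (hZD : Commute Z D) (hDS : Commute D S) (hcS : Commute c S)
    (hKZ : K * Z = L * (D - S)) (hZK : Z * K = L * (D + c - S)) :
    Commute (K + aeval D f) (L + Z * dividedDifference D S f) := by
  have kinetic_left : K * (Z * dividedDifference D S f) = L * (aeval D f - aeval S f) := by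
    rw [← mul_assoc, hKZ, mul_assoc, sub_mul_dividedDifference hDS]
  have kinetic_right : Z * dividedDifference D S f * K = L * (aeval (D + c) f - aeval S f) := by
    rw [mul_assoc, ← (semiconjBy_dividedDifference hKD hKS f).eq, ← mul_assoc, hZK, mul_assoc,
      sub_mul_dividedDifference (hDS.add_left hcS)]
  have potential : Commute (aeval D f) (Z * dividedDifference D S f) :=
    have hD : Commute (aeval D f) D := (semiconjBy_aeval (Commute.refl D) f).symm
    have hS : Commute (aeval D f) S := (semiconjBy_aeval hDS.symm f).symm
    have hZ : Commute (aeval D f) Z := (semiconjBy_aeval hZD f).symm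
    hZ.mul_right (semiconjBy_dividedDifference hD hS f)
  calc (K + aeval D f) * (L + Z * dividedDifference D S f)
      = K * L + aeval D f * L + K * (Z * dividedDifference D S f)
          + aeval D f * (Z * dividedDifference D S f) := by noncomm_ring
    _ = L * K + L * aeval (D + c) f + L * (aeval D f - aeval S f)
          + Z * dividedDifference D S f * aeval D f := by
      rw [hKL.eq, ← (semiconjBy_aeval hLD f).eq, kinetic_left, potential.eq]
    _ = L * K + L * aeval D f + L * (aeval (D + c) f - aeval S f)
          + Z * dividedDifference D S f * aeval D f := by noncomm_ring
    _ = (L + Z * dividedDifference D S f) * (K + aeval D f) := by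
      rw [← kinetic_right]; noncomm_ring

end DividedDifference

section CanonicalPairs

variable {A : Type*} [Ring A]

/-- The generator `D = q₁p₁ + q₂p₂` of dilations. -/
def dilation (q₁ q₂ p₁ p₂ : A) : A := q₁ * p₁ + q₂ * p₂

/-- The generator `C = q₁p₂ - q₂p₁` of rotations. -/
def angularMomentum (q₁ q₂ p₁ p₂ : A) : A := q₁ * p₂ - q₂ * p₁

theorem dilation_reflect (q₁ q₂ p₁ p₂ : A) :
    dilation q₁ (-q₂) p₁ (-p₂) = dilation q₁ q₂ p₁ p₂ := by
  simp only [dilation, neg_mul_neg]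

variable [Algebra ℂ A]

/-- Two canonical pairs in a complex algebra: `[qⱼ, pₖ] = i δⱼₖ`, `[qⱼ, qₖ] = [pⱼ, pₖ] = 0`. -/
structure IsCanonical (q₁ q₂ p₁ p₂ : A) : Prop where
  commute_q₁_q₂ : Commute q₁ q₂
  commute_p₁_p₂ : Commute p₁ p₂
  commute_p₁_q₂ : Commute p₁ q₂
  commute_p₂_q₁ : Commute p₂ q₁
  p₁_mul_q₁ : p₁ * q₁ = q₁ * p₁ - I • 1
  p₂_mul_q₂ : p₂ * q₂ = q₂ * p₂ - I • 1

/-- The Zernike Hamiltonian `p₁² + p₂² + f(D)` for an arbitrary polynomial `f`. -/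
def zernikeHamiltonian (q₁ q₂ p₁ p₂ : A) (f : ℂ[X]) : A :=
  p₁ ^ 2 + p₂ ^ 2 + aeval (dilation q₁ q₂ p₁ p₂) f

/-- The product of the complex position `q₁ + iq₂` and the complex momentum `p₁ + ip₂`, which
multiplies the divided difference in the chiral integral. -/
def chiralDilation (q₁ q₂ p₁ p₂ : A) : A := (q₁ + I • q₂) * (p₁ + I • p₂)

/-- As a linear function of the polynomial `f`, the term which, added to `(p₁ + ip₂)²`, yields an
integral of the Zernike Hamiltonian of `f`. -/
def chiralCorrection (q₁ q₂ p₁ p₂ : A) : ℂ[X] →ₗ[ℂ] A :=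
  LinearMap.mulLeft ℂ (chiralDilation q₁ q₂ p₁ p₂) ∘ₗ
    dividedDifference (dilation q₁ q₂ p₁ p₂) (I • angularMomentum q₁ q₂ p₁ p₂ + (2 * I) • 1)

/-- As a linear function of the polynomial `f`, the term which, added to `p₂²`, yields an integral
of the Zernike Hamiltonian of `f`. -/
def realCorrection (q₁ q₂ p₁ p₂ : A) : ℂ[X] →ₗ[ℂ] A :=
  (1 / 2 : ℂ) • (aeval (dilation q₁ q₂ p₁ p₂)).toLinearMap -
    (1 / 4 : ℂ) • (chiralCorrection q₁ q₂ p₁ p₂ + chiralCorrection q₁ (-q₂) p₁ (-p₂))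

/-- The polynomial `γ₁X + γ₂X² + γ₃X³ + γ₄X⁴` of the Hamiltonian `Ĥ₄`. -/
def quarticPotential (γ₁ γ₂ γ₃ γ₄ : ℂ) : ℂ[X] :=
  γ₁ • X + γ₂ • X ^ 2 + γ₃ • X ^ 3 + γ₄ • X ^ 4

/-- The integral `Î₄` in an algebra containing two canonical pairs. -/
def quarticIntegral (q₁ q₂ p₁ p₂ : A) (γ₁ γ₂ γ₃ γ₄ : ℂ) : A :=
  p₂ ^ 2 + γ₁ • (q₂ * p₂)
    + γ₂ • ((q₁ ^ 2 + q₂ ^ 2) * p₂ ^ 2 - angularMomentum q₁ q₂ p₁ p₂ ^ 2)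
    + γ₃ • (q₂ ^ 3 * (p₂ ^ 3 - p₁ ^ 2 * p₂) + (q₁ ^ 3 + (3 : ℂ) • (q₁ * q₂ ^ 2)) * (p₁ * p₂ ^ 2)
        - (3 * I) • (q₂ ^ 2 * p₂ ^ 2) - (3 * I) • (q₁ * q₂ * p₁ * p₂) - q₂ * p₂)
    + γ₄ • ((q₂ ^ 4 - q₁ ^ 4) * (p₂ ^ 4 - p₁ ^ 2 * p₂ ^ 2)
        + (4 : ℂ) • ((q₁ ^ 3 * q₂ + q₁ * q₂ ^ 3) * (p₁ * p₂ ^ 3))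
        - (6 * I) • ((q₂ ^ 3 + q₁ ^ 2 * q₂) * p₂ ^ 3)
        - (6 * I) • ((q₁ ^ 3 + q₁ * q₂ ^ 2) * (p₁ * p₂ ^ 2))
        - (4 : ℂ) • ((q₁ ^ 2 + q₂ ^ 2) * p₂ ^ 2)
        + (4 : ℂ) • angularMomentum q₁ q₂ p₁ p₂ ^ 2)

namespace IsCanonical

variable {q₁ q₂ p₁ p₂ : A}

theorem reflect (h : IsCanonical q₁ q₂ p₁ p₂) : IsCanonical q₁ (-q₂) p₁ (-p₂) where
  commute_q₁_q₂ := h.commute_q₁_q₂.neg_right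
  commute_p₁_p₂ := h.commute_p₁_p₂.neg_right
  commute_p₁_q₂ := h.commute_p₁_q₂.neg_right
  commute_p₂_q₁ := h.commute_p₂_q₁.neg_left
  p₁_mul_q₁ := h.p₁_mul_q₁
  p₂_mul_q₂ := by simp only [neg_mul_neg, h.p₂_mul_q₂]

-- Rewriting with these equations brings every word in `q₁, q₂, p₁, p₂`, bracketed to the right,
-- into the order `q₁ < q₂ < p₁ < p₂`; the versions with a tail `w` act inside a word.
theorem normalOrdering (h : IsCanonical q₁ q₂ p₁ p₂) :
    q₂ * q₁ = q₁ * q₂ ∧ (∀ w, q₂ * (q₁ * w) = q₁ * (q₂ * w)) ∧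
    p₂ * p₁ = p₁ * p₂ ∧ (∀ w, p₂ * (p₁ * w) = p₁ * (p₂ * w)) ∧
    p₁ * q₂ = q₂ * p₁ ∧ (∀ w, p₁ * (q₂ * w) = q₂ * (p₁ * w)) ∧
    p₂ * q₁ = q₁ * p₂ ∧ (∀ w, p₂ * (q₁ * w) = q₁ * (p₂ * w)) ∧
    p₁ * q₁ = q₁ * p₁ - I • 1 ∧ (∀ w, p₁ * (q₁ * w) = q₁ * (p₁ * w) - I • w) ∧
    p₂ * q₂ = q₂ * p₂ - I • 1 ∧ (∀ w, p₂ * (q₂ * w) = q₂ * (p₂ * w) - I • w) := by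
  refine ⟨h.commute_q₁_q₂.symm, h.commute_q₁_q₂.symm.left_comm, h.commute_p₁_p₂.symm,
    h.commute_p₁_p₂.symm.left_comm, h.commute_p₁_q₂, h.commute_p₁_q₂.left_comm,
    h.commute_p₂_q₁, h.commute_p₂_q₁.left_comm, h.p₁_mul_q₁, fun w ↦ ?_, h.p₂_mul_q₂, fun w ↦ ?_⟩
  · rw [← mul_assoc, h.p₁_mul_q₁, sub_mul, mul_assoc, smul_one_mul]
  · rw [← mul_assoc, h.p₂_mul_q₂, sub_mul, mul_assoc, smul_one_mul]

theorem commute_dilation_angularMomentum (h : IsCanonical q₁ q₂ p₁ p₂) :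
    Commute (dilation q₁ q₂ p₁ p₂) (angularMomentum q₁ q₂ p₁ p₂) := by
  simp only [Commute, SemiconjBy, dilation, angularMomentum, mul_assoc, add_mul, mul_add,
    sub_mul, mul_sub, mul_smul_comm, h.normalOrdering]
  match_scalars <;> grind [I_sq]

theorem semiconjBy_momentumSq (h : IsCanonical q₁ q₂ p₁ p₂) :
    SemiconjBy (p₁ ^ 2 + p₂ ^ 2) (dilation q₁ q₂ p₁ p₂ + (2 * I) • 1)
      (dilation q₁ q₂ p₁ p₂) := by
  simp only [SemiconjBy, dilation, pow_two, mul_assoc, add_mul, mul_add, mul_sub,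
    mul_smul_comm, mul_one, h.normalOrdering]
  match_scalars <;> grind [I_sq]

theorem commute_chiralDilation_dilation (h : IsCanonical q₁ q₂ p₁ p₂) :
    Commute (chiralDilation q₁ q₂ p₁ p₂) (dilation q₁ q₂ p₁ p₂) := by
  simp only [Commute, SemiconjBy, chiralDilation, dilation, mul_assoc, add_mul, mul_add, mul_sub,
    smul_mul_assoc, mul_smul_comm, h.normalOrdering]
  match_scalars <;> grind [I_sq]

theorem commute_momentumSq_angularMomentum (h : IsCanonical q₁ q₂ p₁ p₂) :
    Commute (p₁ ^ 2 + p₂ ^ 2) (angularMomentum q₁ q₂ p₁ p₂) := by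
  simp only [Commute, SemiconjBy, angularMomentum, pow_two, mul_assoc, add_mul, mul_add,
    sub_mul, mul_sub, mul_smul_comm, h.normalOrdering]
  abel

theorem semiconjBy_chiralMomentumSq (h : IsCanonical q₁ q₂ p₁ p₂) :
    SemiconjBy ((p₁ + I • p₂) ^ 2) (dilation q₁ q₂ p₁ p₂ + (2 * I) • 1)
      (dilation q₁ q₂ p₁ p₂) := by
  simp only [SemiconjBy, dilation, pow_two, mul_assoc, add_mul, mul_add, mul_sub,
    smul_mul_assoc, mul_smul_comm, mul_one, h.normalOrdering]
  match_scalars <;> grind [I_sq]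

theorem momentumSq_mul_chiralDilation (h : IsCanonical q₁ q₂ p₁ p₂) :
    (p₁ ^ 2 + p₂ ^ 2) * chiralDilation q₁ q₂ p₁ p₂ =
      (p₁ + I • p₂) ^ 2 * (dilation q₁ q₂ p₁ p₂ -
        (I • angularMomentum q₁ q₂ p₁ p₂ + (2 * I) • 1)) := by
  simp only [chiralDilation, dilation, angularMomentum, pow_two, mul_assoc, add_mul, mul_add,
    mul_sub, smul_mul_assoc, mul_smul_comm, mul_one, h.normalOrdering]
  match_scalars <;> grind [I_sq]

theorem chiralDilation_mul_momentumSq (h : IsCanonical q₁ q₂ p₁ p₂) :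
    chiralDilation q₁ q₂ p₁ p₂ * (p₁ ^ 2 + p₂ ^ 2) =
      (p₁ + I • p₂) ^ 2 * (dilation q₁ q₂ p₁ p₂ + (2 * I) • 1 -
        (I • angularMomentum q₁ q₂ p₁ p₂ + (2 * I) • 1)) := by
  simp only [chiralDilation, dilation, angularMomentum, pow_two, mul_assoc, add_mul, mul_add,
    mul_sub, smul_mul_assoc, mul_smul_comm, mul_one, h.normalOrdering]
  match_scalars <;> grind [I_sq]

theorem commute_zernikeHamiltonian_chiralIntegral (h : IsCanonical q₁ q₂ p₁ p₂) (f : ℂ[X]) :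
    Commute (zernikeHamiltonian q₁ q₂ p₁ p₂ f)
      ((p₁ + I • p₂) ^ 2 + chiralCorrection q₁ q₂ p₁ p₂ f) := by
  have scalar (z : ℂ) (a : A) : Commute a (z • 1) := (Commute.one_right a).smul_right z
  have hKL : Commute (p₁ ^ 2 + p₂ ^ 2) ((p₁ + I • p₂) ^ 2) :=
    have h₁ : Commute p₁ (p₁ + I • p₂) :=
      (Commute.refl p₁).add_right (h.commute_p₁_p₂.smul_right I)
    have h₂ : Commute p₂ (p₁ + I • p₂) :=
      h.commute_p₁_p₂.symm.add_right ((Commute.refl p₂).smul_right I)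
    (h₁.pow_pow 2 2).add_left (h₂.pow_pow 2 2)
  exact commute_add_aeval_add_mul_dividedDifference f hKL h.semiconjBy_momentumSq
    h.semiconjBy_chiralMomentumSq
    ((h.commute_momentumSq_angularMomentum.smul_right I).add_right (scalar _ _))
    h.commute_chiralDilation_dilation
    ((h.commute_dilation_angularMomentum.smul_right I).add_right (scalar _ _))
    (scalar _ _).symm h.momentumSq_mul_chiralDilation h.chiralDilation_mul_momentumSq

theorem commute_zernikeHamiltonian_angularMomentum (h : IsCanonical q₁ q₂ p₁ p₂) (f : ℂ[X]) :
    Commute (zernikeHamiltonian q₁ q₂ p₁ p₂ f) (angularMomentum q₁ q₂ p₁ p₂) :=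
  h.commute_momentumSq_angularMomentum.add_left
    (semiconjBy_aeval h.commute_dilation_angularMomentum.symm f).symm

theorem commute_zernikeHamiltonian_sq_add_realCorrection (h : IsCanonical q₁ q₂ p₁ p₂)
    (f : ℂ[X]) :
    Commute (zernikeHamiltonian q₁ q₂ p₁ p₂ f) (p₂ ^ 2 + realCorrection q₁ q₂ p₁ p₂ f) := by
  have chiral := h.commute_zernikeHamiltonian_chiralIntegral f
  have antichiral := h.reflect.commute_zernikeHamiltonian_chiralIntegral f
  rw [show zernikeHamiltonian q₁ (-q₂) p₁ (-p₂) f = zernikeHamiltonian q₁ q₂ p₁ p₂ f by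
    rw [zernikeHamiltonian, zernikeHamiltonian, dilation_reflect, neg_sq]] at antichiral
  have decomposition : p₂ ^ 2 + realCorrection q₁ q₂ p₁ p₂ f =
      (1 / 2 : ℂ) • zernikeHamiltonian q₁ q₂ p₁ p₂ f - (1 / 4 : ℂ) •
        ((p₁ + I • p₂) ^ 2 + chiralCorrection q₁ q₂ p₁ p₂ f +
          ((p₁ + I • -p₂) ^ 2 + chiralCorrection q₁ (-q₂) p₁ (-p₂) f)) := by
    simp only [realCorrection, LinearMap.sub_apply, LinearMap.smul_apply, LinearMap.add_apply,
      AlgHom.toLinearMap_apply, zernikeHamiltonian, pow_two, add_mul, mul_add, smul_mul_assoc,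
      mul_smul_comm, mul_neg, neg_mul, smul_neg]
    match_scalars <;> grind [I_sq]
  rw [decomposition]
  exact ((Commute.refl _).smul_right _).sub_right ((chiral.add_right antichiral).smul_right _)

theorem chiralCorrection_X_mul (h : IsCanonical q₁ q₂ p₁ p₂) (f : ℂ[X]) :
    chiralCorrection q₁ q₂ p₁ p₂ (X * f) =
      dilation q₁ q₂ p₁ p₂ * chiralCorrection q₁ q₂ p₁ p₂ f +
        chiralDilation q₁ q₂ p₁ p₂ *
          aeval (I • angularMomentum q₁ q₂ p₁ p₂ + (2 * I) • 1) f := by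
  simp only [chiralCorrection, LinearMap.comp_apply, LinearMap.mulLeft_apply,
    dividedDifference_X_mul]
  rw [mul_add, ← mul_assoc, ← mul_assoc, h.commute_chiralDilation_dilation.eq]

theorem realCorrection_X_mul (h : IsCanonical q₁ q₂ p₁ p₂) (f : ℂ[X]) :
    realCorrection q₁ q₂ p₁ p₂ (X * f) =
      dilation q₁ q₂ p₁ p₂ * realCorrection q₁ q₂ p₁ p₂ f - (1 / 4 : ℂ) •
        (chiralDilation q₁ q₂ p₁ p₂ *
            aeval (I • angularMomentum q₁ q₂ p₁ p₂ + (2 * I) • 1) f +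
          (q₁ - I • q₂) * (p₁ - I • p₂) *
            aeval (-I • angularMomentum q₁ q₂ p₁ p₂ + (2 * I) • 1) f) := by
  have hC : I • angularMomentum q₁ (-q₂) p₁ (-p₂) = -I • angularMomentum q₁ q₂ p₁ p₂ := by
    simp only [angularMomentum, mul_neg, neg_mul, neg_smul, ← smul_neg, neg_sub]
    module
  have hZ : chiralDilation q₁ (-q₂) p₁ (-p₂) = (q₁ - I • q₂) * (p₁ - I • p₂) := by
    simp only [chiralDilation, smul_neg, ← sub_eq_add_neg]
  simp only [realCorrection, LinearMap.sub_apply, LinearMap.smul_apply, LinearMap.add_apply,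
    AlgHom.toLinearMap_apply, h.chiralCorrection_X_mul, h.reflect.chiralCorrection_X_mul,
    dilation_reflect, hC, hZ, map_mul, aeval_X, mul_sub, mul_add, mul_smul_comm, smul_add]
  abel

theorem realCorrection_X (h : IsCanonical q₁ q₂ p₁ p₂) :
    realCorrection q₁ q₂ p₁ p₂ X = q₂ * p₂ := by
  have realCorrection_one : realCorrection q₁ q₂ p₁ p₂ 1 = (1 / 2 : ℂ) • 1 := by
    simp [realCorrection, chiralCorrection, dividedDifference_one]
  rw [← mul_one X, h.realCorrection_X_mul, realCorrection_one]
  simp only [chiralDilation, dilation, map_one, add_mul, mul_add, sub_mul, mul_sub, smul_mul_assoc,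
    mul_smul_comm, mul_one]
  match_scalars <;> grind [I_sq]

theorem realCorrection_X_sq (h : IsCanonical q₁ q₂ p₁ p₂) :
    realCorrection q₁ q₂ p₁ p₂ (X ^ 2) =
      (q₁ ^ 2 + q₂ ^ 2) * p₂ ^ 2 - (1 / 2 : ℂ) • angularMomentum q₁ q₂ p₁ p₂ ^ 2 := by
  rw [pow_two, h.realCorrection_X_mul, h.realCorrection_X, aeval_X, aeval_X]
  simp only [chiralDilation, dilation, angularMomentum, pow_succ', pow_zero, mul_assoc, add_mul,
    mul_add, sub_mul, mul_sub, smul_mul_assoc, mul_smul_comm, mul_one, h.normalOrdering]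
  match_scalars <;> grind [I_sq]

theorem realCorrection_X_pow_three (h : IsCanonical q₁ q₂ p₁ p₂) :
    realCorrection q₁ q₂ p₁ p₂ (X ^ 3) =
      q₂ ^ 3 * (p₂ ^ 3 - p₁ ^ 2 * p₂) + (q₁ ^ 3 + (3 : ℂ) • (q₁ * q₂ ^ 2)) * (p₁ * p₂ ^ 2)
        - (3 * I) • (q₂ ^ 2 * p₂ ^ 2) - (3 * I) • (q₁ * q₂ * p₁ * p₂) - q₂ * p₂ := by
  rw [pow_succ', h.realCorrection_X_mul, h.realCorrection_X_sq, map_pow, map_pow, aeval_X, aeval_X]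
  simp only [chiralDilation, dilation, angularMomentum, pow_succ', pow_zero, mul_assoc, add_mul,
    mul_add, sub_mul, mul_sub, smul_mul_assoc, mul_smul_comm, mul_one, one_mul, h.normalOrdering]
  match_scalars <;> grind [I_sq]

theorem realCorrection_X_pow_four (h : IsCanonical q₁ q₂ p₁ p₂) :
    realCorrection q₁ q₂ p₁ p₂ (X ^ 4) =
      (q₂ ^ 4 - q₁ ^ 4) * (p₂ ^ 4 - p₁ ^ 2 * p₂ ^ 2)
        + (4 : ℂ) • ((q₁ ^ 3 * q₂ + q₁ * q₂ ^ 3) * (p₁ * p₂ ^ 3))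
        - (6 * I) • ((q₂ ^ 3 + q₁ ^ 2 * q₂) * p₂ ^ 3)
        - (6 * I) • ((q₁ ^ 3 + q₁ * q₂ ^ 2) * (p₁ * p₂ ^ 2))
        - (4 : ℂ) • ((q₁ ^ 2 + q₂ ^ 2) * p₂ ^ 2)
        + (1 / 2 : ℂ) • angularMomentum q₁ q₂ p₁ p₂ ^ 4 := by
  rw [pow_succ', h.realCorrection_X_mul, h.realCorrection_X_pow_three, map_pow, map_pow,
    aeval_X, aeval_X]
  simp only [chiralDilation, dilation, angularMomentum, pow_succ', pow_zero, mul_assoc, add_mul,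
    mul_add, sub_mul, mul_sub, smul_mul_assoc, mul_smul_comm, mul_one, one_mul, h.normalOrdering]
  match_scalars <;> grind [I_sq]

theorem quarticIntegral_eq (h : IsCanonical q₁ q₂ p₁ p₂) (γ₁ γ₂ γ₃ γ₄ : ℂ) :
    quarticIntegral q₁ q₂ p₁ p₂ γ₁ γ₂ γ₃ γ₄ =
      p₂ ^ 2 + realCorrection q₁ q₂ p₁ p₂ (quarticPotential γ₁ γ₂ γ₃ γ₄) +
        ((4 * γ₄ - γ₂ / 2) • angularMomentum q₁ q₂ p₁ p₂ ^ 2 -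
          (γ₄ / 2) • angularMomentum q₁ q₂ p₁ p₂ ^ 4) := by
  simp only [quarticIntegral, quarticPotential, map_add, map_smul, h.realCorrection_X,
    h.realCorrection_X_sq, h.realCorrection_X_pow_three, h.realCorrection_X_pow_four]
  module

theorem commute_zernikeHamiltonian_quarticIntegral (h : IsCanonical q₁ q₂ p₁ p₂)
    (γ₁ γ₂ γ₃ γ₄ : ℂ) :
    Commute (zernikeHamiltonian q₁ q₂ p₁ p₂ (quarticPotential γ₁ γ₂ γ₃ γ₄))
      (quarticIntegral q₁ q₂ p₁ p₂ γ₁ γ₂ γ₃ γ₄) := by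
  have hC := h.commute_zernikeHamiltonian_angularMomentum (quarticPotential γ₁ γ₂ γ₃ γ₄)
  rw [h.quarticIntegral_eq]
  exact (h.commute_zernikeHamiltonian_sq_add_realCorrection _).add_right
    (((hC.pow_right 2).smul_right _).sub_right ((hC.pow_right 4).smul_right _))

end IsCanonical

end CanonicalPairs

section SmoothFunctions

variable {E : Type*} [NormedAddCommGroup E] [NormedSpace ℝ E]

/-- The complex vector space of smooth complex-valued functions on a real normed space, a common
invariant domain for positions and momenta. -/
def smoothFunctions (E : Type*) [NormedAddCommGroup E] [NormedSpace ℝ E] :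
    Submodule ℂ (E → ℂ) where
  carrier := {ψ | ContDiff ℝ (⊤ : ℕ∞) ψ}
  add_mem' hφ hψ := Set.mem_ofPred.2 (hφ.out.add hψ.out)
  zero_mem' := Set.mem_ofPred.2 contDiff_zero_fun
  smul_mem' c _ hψ := Set.mem_ofPred.2 (hψ.out.const_smul c)

theorem contDiff_smoothFunctions (ψ : smoothFunctions E) :
    ContDiff ℝ (⊤ : ℕ∞) (ψ : E → ℂ) := ψ.2

theorem differentiable_smoothFunctions (ψ : smoothFunctions E) : Differentiable ℝ (ψ : E → ℂ) :=
  (contDiff_smoothFunctions ψ).differentiable (by simp)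

/-- The position operator of a linear coordinate `ℓ`: multiplication by `ℓ`. -/
def position (ℓ : E →L[ℝ] ℝ) : Module.End ℂ (smoothFunctions E) where
  toFun ψ := ⟨fun x ↦ ℓ x * (ψ : E → ℂ) x,
    (ofRealCLM.contDiff.comp ℓ.contDiff).mul (contDiff_smoothFunctions ψ)⟩
  map_add' _ _ := Subtype.ext <| funext fun _ ↦ mul_add _ _ _
  map_smul' _ _ := Subtype.ext <| funext fun _ ↦ mul_left_comm _ _ _

/-- The momentum operator in the direction `v`: the directional derivative along `v`, times
`-i`. -/
def momentum (v : E) : Module.End ℂ (smoothFunctions E) where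
  toFun ψ := ⟨fun x ↦ -I * fderiv ℝ ψ x v, show ContDiff ℝ (⊤ : ℕ∞) _ from
    contDiff_const.mul <| ((contDiff_smoothFunctions ψ).fderiv_right (by simp)).clm_apply
      contDiff_const⟩
  map_add' φ ψ := by
    ext x
    simp [fderiv_add (differentiable_smoothFunctions φ x) (differentiable_smoothFunctions ψ x),
      mul_add]
  map_smul' c ψ := by
    ext x
    simp [fderiv_const_smul (differentiable_smoothFunctions ψ x) c, mul_left_comm]

theorem momentum_apply (v : E) (ψ : smoothFunctions E) (x : E) :
    (momentum v ψ : E → ℂ) x = -I * fderiv ℝ ψ x v := rfl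

theorem commute_position_position (ℓ m : E →L[ℝ] ℝ) : Commute (position ℓ) (position m) :=
  LinearMap.ext fun _ ↦ Subtype.ext <| funext fun _ ↦ mul_left_comm _ _ _

theorem commute_momentum_momentum (v w : E) : Commute (momentum v) (momentum w) := by
  have momentum_momentum (v w : E) (ψ : smoothFunctions E) (x : E) :
      (momentum v (momentum w ψ) : E → ℂ) x = -fderiv ℝ (fderiv ℝ ψ) x v w := by
    have hψ : DifferentiableAt ℝ (fderiv ℝ (ψ : E → ℂ)) x :=
      ((contDiff_smoothFunctions ψ).fderiv_right (m := 1)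
        (WithTop.coe_le_coe.2 le_top)).differentiable one_ne_zero x
    have h : HasFDerivAt (momentum w ψ : E → ℂ) _ x :=
      (hψ.hasFDerivAt.clm_apply (hasFDerivAt_const w x)).const_mul (-I)
    rw [momentum_apply, h.fderiv]
    simp [← mul_assoc]
  refine LinearMap.ext fun ψ ↦ Subtype.ext <| funext fun x ↦ ?_
  have symm : IsSymmSndFDerivAt ℝ (ψ : E → ℂ) x :=
    (contDiff_smoothFunctions ψ).contDiffAt.isSymmSndFDerivAt <| by
      rw [minSmoothness_of_isRCLikeNormedField]
      exact WithTop.coe_le_coe.2 (le_top : (2 : ℕ∞) ≤ ⊤)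
  exact (momentum_momentum v w ψ x).trans <| (congrArg _ (symm v w)).trans
    (momentum_momentum w v ψ x).symm

theorem momentum_mul_position (v : E) (ℓ : E →L[ℝ] ℝ) :
    momentum v * position ℓ = position ℓ * momentum v - (I * ℓ v) • 1 := by
  refine LinearMap.ext fun ψ ↦ Subtype.ext <| funext fun x ↦ ?_
  have h : HasFDerivAt (position ℓ ψ : E → ℂ) _ x :=
    (ofRealCLM.hasFDerivAt.comp x ℓ.hasFDerivAt).mul
      (differentiable_smoothFunctions ψ x).hasFDerivAt
  change -I * fderiv ℝ (position ℓ ψ) x v =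
    ℓ x * (-I * fderiv ℝ ψ x v) - I * ℓ v * (ψ : E → ℂ) x
  rw [h.fderiv]
  simp only [Function.comp_apply, ofRealCLM_apply, add_apply, smul_apply, smul_eq_mul,
    ContinuousLinearMap.comp_apply]
  ring

theorem commute_momentum_position {v : E} {ℓ : E →L[ℝ] ℝ} (h : ℓ v = 0) :
    Commute (momentum v) (position ℓ) := by
  rw [commute_iff_eq, momentum_mul_position, h, ofReal_zero, mul_zero, zero_smul]
  exact sub_zero (position ℓ * momentum v)

end SmoothFunctions

theorem isCanonical_position_momentum :
    IsCanonical (position (.fst ℝ ℝ ℝ)) (position (.snd ℝ ℝ ℝ))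
      (momentum ((1, 0) : ℝ × ℝ)) (momentum (0, 1)) where
  commute_q₁_q₂ := commute_position_position _ _
  commute_p₁_p₂ := commute_momentum_momentum _ _
  commute_p₁_q₂ := commute_momentum_position (by simp)
  commute_p₂_q₁ := commute_momentum_position (by simp)
  p₁_mul_q₁ := by simp [momentum_mul_position]
  p₂_mul_q₂ := by simp [momentum_mul_position]

theorem coe_position_fst (ψ : smoothFunctions (ℝ × ℝ)) :
    (position (.fst ℝ ℝ ℝ) ψ : WF) = q1op ψ := rfl

theorem coe_position_snd (ψ : smoothFunctions (ℝ × ℝ)) :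
    (position (.snd ℝ ℝ ℝ) ψ : WF) = q2op ψ := rfl

theorem coe_momentum_fst (ψ : smoothFunctions (ℝ × ℝ)) :
    (momentum (1, 0) ψ : WF) = p1op ψ := by
  funext x
  have h : HasDerivAt (fun t ↦ (ψ : WF) (t, x.2)) (fderiv ℝ (ψ : WF) x (1, 0)) x.1 :=
    (differentiable_smoothFunctions ψ x).hasFDerivAt.comp_hasDerivAt x.1
      ((hasDerivAt_id x.1).prodMk (hasDerivAt_const x.1 x.2))
  rw [momentum_apply, p1op, h.deriv]

theorem coe_momentum_snd (ψ : smoothFunctions (ℝ × ℝ)) :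
    (momentum (0, 1) ψ : WF) = p2op ψ := by
  funext x
  have h : HasDerivAt (fun t ↦ (ψ : WF) (x.1, t)) (fderiv ℝ (ψ : WF) x (0, 1)) x.2 :=
    (differentiable_smoothFunctions ψ x).hasFDerivAt.comp_hasDerivAt x.2
      ((hasDerivAt_const x.2 x.1).prodMk (hasDerivAt_id x.2))
  rw [momentum_apply, p2op, h.deriv]

theorem coe_dilation (ψ : smoothFunctions (ℝ × ℝ)) :
    (dilation (position (.fst ℝ ℝ ℝ)) (position (.snd ℝ ℝ ℝ)) (momentum (1, 0))
      (momentum (0, 1)) ψ : WF) = Dop ψ := by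
  simp [dilation, Dop, coe_position_fst, coe_position_snd, coe_momentum_fst, coe_momentum_snd]

theorem coe_zernikeHamiltonian (γ₁ γ₂ γ₃ γ₄ : ℂ) (ψ : smoothFunctions (ℝ × ℝ)) :
    (zernikeHamiltonian (position (.fst ℝ ℝ ℝ)) (position (.snd ℝ ℝ ℝ)) (momentum (1, 0))
      (momentum (0, 1)) (quarticPotential γ₁ γ₂ γ₃ γ₄) ψ : WF) = H4op γ₁ γ₂ γ₃ γ₄ ψ := by
  simp [zernikeHamiltonian, quarticPotential, pow_succ', Module.End.mul_apply, H4op,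
    coe_dilation, coe_momentum_fst, coe_momentum_snd, ← add_assoc]

theorem coe_quarticIntegral (γ₁ γ₂ γ₃ γ₄ : ℂ) (ψ : smoothFunctions (ℝ × ℝ)) :
    (quarticIntegral (position (.fst ℝ ℝ ℝ)) (position (.snd ℝ ℝ ℝ)) (momentum (1, 0))
      (momentum (0, 1)) γ₁ γ₂ γ₃ γ₄ ψ : WF) = I4op γ₁ γ₂ γ₃ γ₄ ψ := by
  simp only [quarticIntegral, angularMomentum, pow_succ', pow_zero, mul_one, Module.End.mul_apply,
    LinearMap.add_apply, LinearMap.sub_apply, LinearMap.smul_apply, Submodule.coe_add,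
    Submodule.coe_sub, Submodule.coe_smul, coe_position_fst, coe_position_snd, coe_momentum_fst,
    coe_momentum_snd, I4op, Iop, Pi.add_apply, Pi.sub_apply, Pi.smul_apply, Function.comp_apply]

/-- The operator `Î₄` commutes with the generalized quantum Zernike Hamiltonian
`Ĥ₄` on smooth functions: `Ĥ₄(Î₄ψ) = Î₄(Ĥ₄ψ)`. -/
theorem H4op_commutes_I4op (γ₁ γ₂ γ₃ γ₄ : ℂ)
    (ψ : WF) (hψ : ContDiff ℝ (⊤ : ℕ∞) ψ) :
    H4op γ₁ γ₂ γ₃ γ₄ (I4op γ₁ γ₂ γ₃ γ₄ ψ) =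
      I4op γ₁ γ₂ γ₃ γ₄ (H4op γ₁ γ₂ γ₃ γ₄ ψ) := by
  lift ψ to smoothFunctions (ℝ × ℝ) using hψ
  have comm := isCanonical_position_momentum.commute_zernikeHamiltonian_quarticIntegral γ₁ γ₂ γ₃ γ₄
  have comm_apply := congrArg Subtype.val (LinearMap.congr_fun comm.eq ψ)
  rwa [Module.End.mul_apply, Module.End.mul_apply, coe_zernikeHamiltonian, coe_quarticIntegral,
    coe_quarticIntegral, coe_zernikeHamiltonian] at comm_apply
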